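/- A finite group G is uniformly generated if and only if either G ≅ (C_p)^d is an elementary abelian p-group, or G ≅ (C_p)^{d-1} ⋊ C_q where p and q are primes and C_q acts as a nontrivial scalar on (C_p)^{d-1}. -/

import Mathlib

/-- A chain `⊥ = c 0 < c 1 < ⋯ < c n = ⊤` of subgroups is *unrefinable* if each
`c i` is maximal in `c (i+1)` (i.e. consecutive terms form a covering pair). -/
def IsUnrefinableChain {G : Type*} [Group G] {n : ℕ} (c : Fin (n + 1) → Subgroup G) : Prop :=
  c 0 = ⊥ ∧ c (Fin.last n) = ⊤ ∧ ∀ i : Fin n, c i.castSucc ⋖ c i.succ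

/-- The length `ℓ(G)`: the maximal length of an unrefinable chain of subgroups. -/
noncomputable def groupLength (G : Type*) [Group G] : ℕ :=
  sSup {n | ∃ c : Fin (n + 1) → Subgroup G, IsUnrefinableChain c}

/-- The depth `λ(G)`: the minimal length of an unrefinable chain of subgroups. -/
noncomputable def groupDepth (G : Type*) [Group G] : ℕ :=
  sInf {n | ∃ c : Fin (n + 1) → Subgroup G, IsUnrefinableChain c}

/-- `d(G)`: the minimal number of generators of `G`. -/
noncomputable def minGen (G : Type*) [Group G] : ℕ :=
  sInf {n | ∃ S : Finset G, S.card = n ∧ Subgroup.closure (S : Set G) = ⊤}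

/-- `m(G)`: the maximal size of an independent generating set of `G`. -/
noncomputable def maxIndep (G : Type*) [Group G] : ℕ :=
  sSup {n | ∃ S : Finset G, S.card = n ∧ Subgroup.closure (S : Set G) = ⊤ ∧
    ∀ a ∈ S, Subgroup.closure ((S : Set G) \ {a}) < ⊤}

/-- Given a tuple `x : Fin d → G`, the chain of subgroups
`⟨⟩ ≤ ⟨x 0⟩ ≤ ⟨x 0, x 1⟩ ≤ ⋯ ≤ ⟨x 0, …, x (d-1)⟩`. -/
def partialClosure {G : Type*} [Group G] {d : ℕ} (x : Fin d → G) (i : Fin (d + 1)) :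
    Subgroup G :=
  Subgroup.closure (x '' {j | (j : ℕ) < (i : ℕ)})

/-- `G` is *`d`-uniformly generated* if strictly ascending chains
`1 < ⟨x 1⟩ < ⋯ < ⟨x 1, …, x d⟩` exist, and every such chain ends at `G`. -/
def DUnifGen (G : Type*) [Group G] (d : ℕ) : Prop :=
  (∃ x : Fin d → G, StrictMono (partialClosure x)) ∧
  ∀ x : Fin d → G, StrictMono (partialClosure x) → Subgroup.closure (Set.range x) = ⊤

/-- `G` is *uniformly generated* if it is `d(G)`-uniformly generated. -/
def UniformlyGenerated (G : Type*) [Group G] : Prop :=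
  DUnifGen G (minGen G)

/-- `G` is elementary abelian: isomorphic to `(C_p)^k` for some prime `p`. -/
def IsElementaryAbelian (G : Type*) [Group G] : Prop :=
  ∃ (p k : ℕ), p.Prime ∧ Nonempty (G ≃* (Fin k → Multiplicative (ZMod p)))

/-- `G` is supersolvable: it has a normal series (all terms normal in `G`)
with cyclic factors (each step is obtained by adjoining a single element). -/
def IsSupersolvableGroup (G : Type*) [Group G] : Prop :=
  ∃ (n : ℕ) (c : Fin (n + 1) → Subgroup G),
    c 0 = ⊥ ∧ c (Fin.last n) = ⊤ ∧ Monotone c ∧ (∀ i, (c i).Normal) ∧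
    ∀ i : Fin n, ∃ g : G, c i.succ = c i.castSucc ⊔ Subgroup.zpowers g

/-- `G` is isomorphic to `(C_p)^{k} ⋊ C_q` where `C_q` acts by a nontrivial scalar:
expressed internally via a normal elementary abelian `p`-subgroup `N`, an element `g`
of order `q` complementing it, whose conjugation action raises every element of `N`
to a fixed power `c` which is a nontrivial scalar of multiplicative order `q` mod `p`. -/
def IsScalarExtension (G : Type*) [Group G] : Prop :=
  ∃ (p q : ℕ), p.Prime ∧ q.Prime ∧
    ∃ (N : Subgroup G) (g : G) (c : ℕ),
      N.Normal ∧ (∀ a ∈ N, ∀ b ∈ N, a * b = b * a) ∧ (∀ a ∈ N, a ^ p = 1) ∧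
      orderOf g = q ∧
      N ⊔ Subgroup.zpowers g = ⊤ ∧ N ⊓ Subgroup.zpowers g = ⊥ ∧
      (∀ n ∈ N, g * n * g⁻¹ = n ^ c) ∧
      c % p ≠ 1 % p ∧ c ^ q % p = 1 % p

/-!
The group `G` is uniformly generated exactly when no chain of subgroups is longer than the minimal
number of generators. Every subgroup generated by `k` elements then has height at most `k`. The
height of a solvable group is the number `Ω` of prime factors of its order, counted with
multiplicity, and groups of height at most two are solvable, so nontrivial elements have prime
order and two elements generate a subgroup whose order has at most two prime factors.

Let `p` be the largest prime divisor of the order of `G` and `x` an element of order `p`. In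
`⟨x, g⟩` the subgroup `⟨x⟩` has index one or the smallest prime factor of the order, so it is
normal. Hence all subgroups of order `p` are normal and commute with each other, and they fill up
the centralizer `N` of `x`. As `G / N` acts faithfully on `⟨x⟩`, it is cyclic, generated by the
image of some `g`; conjugation by `g` maps each element of `N` to a power of itself, and a linear
map for which every vector is an eigenvector is a scalar.

Conversely, in the listed groups adjoining an element to a subgroup raises `Ω` of its order by at
most one, so `Ω` of the order of `G` bounds both the minimal number of generators from below and
the length of chains from above.
-/

section

open Subgroup
open scoped ArithmeticFunction.Omega

variable {G : Type*} [Group G]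

theorem cardFactors_card_add_cardFactors_relIndex {H K : Subgroup G} [Finite K] (hHK : H ≤ K) :
    Ω (Nat.card H) + Ω (H.relIndex K) = Ω (Nat.card K) := by
  have hcard : Nat.card H * H.relIndex K = Nat.card K := by
    rw [← relIndex_bot_left, ← relIndex_bot_left, relIndex_mul_relIndex _ _ _ bot_le hHK]
  have hne : Nat.card H * H.relIndex K ≠ 0 := hcard ▸ Nat.card_pos.ne'
  rw [← hcard, ArithmeticFunction.cardFactors_mul (left_ne_zero_of_mul hne)
    (right_ne_zero_of_mul hne)]

theorem cardFactors_card_strictMono [Finite G] :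
    StrictMono fun H : Subgroup G => Ω (Nat.card H) := by
  intro H K hHK
  have hone : 1 < H.relIndex K := by
    have hne : H.relIndex K ≠ 1 := fun h => hHK.not_ge (relIndex_eq_one.1 h)
    have hpos : H.relIndex K ≠ 0 := index_ne_zero_of_finite
    omega
  have hpos := ArithmeticFunction.cardFactors_pos_iff_one_lt.2 hone
  have hadd := cardFactors_card_add_cardFactors_relIndex hHK.le
  simp only
  omega

theorem cardFactors_card_sup_le [Finite G] (H K : Subgroup G) [H.Normal] :
    Ω (Nat.card (H ⊔ K : Subgroup G)) ≤ Ω (Nat.card H) + Ω (Nat.card K) := by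
  rw [← cardFactors_card_add_cardFactors_relIndex (le_sup_left : H ≤ H ⊔ K), relIndex_sup_left,
    ← inf_relIndex_right, ← cardFactors_card_add_cardFactors_relIndex (inf_le_right : H ⊓ K ≤ K)]
  omega

theorem height_le_cardFactors_card [Finite G] (H : Subgroup G) :
    Order.height H ≤ Ω (Nat.card H) :=
  (Order.height_le_height_apply_of_strictMono _ cardFactors_card_strictMono H).trans_eq
    (Order.height_nat _)

theorem height_top_le_height (H : Subgroup G) :
    Order.height (⊤ : Subgroup H) ≤ Order.height H := by
  have hmono : StrictMono (map H.subtype) :=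
    fun _ _ => (map_lt_map_iff_of_injective H.subtype_injective).2
  simpa [← MonoidHom.range_eq_map] using
    Order.height_le_height_apply_of_strictMono _ hmono (⊤ : Subgroup H)

theorem exists_index_prime_of_isSolvable [Finite G] [Nontrivial G] [Group.IsSolvable G] :
    ∃ M : Subgroup G, M.index.Prime := by
  obtain ⟨M, hM, hle⟩ := (eq_top_or_exists_le_coatom (commutator G)).resolve_left
    (Group.IsSolvable.commutator_lt_top_of_nontrivial G).ne
  have hnormal : M.Normal := Normal.of_commutator_le G hle
  have hcomm : IsMulCommutative (G ⧸ M) := Normal.quotient_commutative_iff_commutator_le.2 hle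
  let e : Subgroup (G ⧸ M) ≃o Set.Ici M := QuotientGroup.comapMk'OrderIso M
  have horder : IsSimpleOrder (Subgroup (G ⧸ M)) :=
    e.isSimpleOrder_iff.2 (Set.isSimpleOrder_Ici_iff_isCoatom.2 hM)
  have hnontrivial : Nontrivial (G ⧸ M) := Subgroup.nontrivial_iff.1 inferInstance
  have hsimple : IsSimpleGroup (G ⧸ M) := ⟨fun H _ => eq_bot_or_eq_top H⟩
  exact ⟨M, Group.is_simple_iff_prime_card.1 hsimple⟩

theorem cardFactors_card_le_height_of_isSolvable [Finite G] (H : Subgroup G)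
    [hH : Group.IsSolvable H] : (Ω (Nat.card H) : ℕ∞) ≤ Order.height H := by
  induction H using WellFoundedLT.induction generalizing hH with
  | ind H ih =>
    rcases subsingleton_or_nontrivial H with hs | hn
    · simp
    obtain ⟨M, hM⟩ := exists_index_prime_of_isSolvable (G := H)
    have hrel : (M.map H.subtype).relIndex H = M.index := by
      rw [relIndex, subgroupOf, comap_map_eq_self_of_injective H.subtype_injective]
    have hle : M.map H.subtype ≤ H := map_subtype_le M
    have hlt : M.map H.subtype < H := hle.lt_of_ne fun heq => hM.ne_one <| by
      rw [← hrel, heq, relIndex_self]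
    have hsolvable : Group.IsSolvable (M.map H.subtype) :=
      Group.isSolvable_of_isSolvable_injective (inclusion_injective hle)
    calc (Ω (Nat.card H) : ℕ∞)
        = Ω (Nat.card (M.map H.subtype)) + 1 := by
          rw [← cardFactors_card_add_cardFactors_relIndex hle, hrel,
            ArithmeticFunction.cardFactors_apply_prime hM]
          norm_cast
      _ ≤ Order.height (M.map H.subtype) + 1 := by gcongr; exact ih _ hlt
      _ ≤ Order.height H := Order.height_add_one_le hlt

theorem isSolvable_of_height_top_le_two [Finite G] (h : Order.height (⊤ : Subgroup G) ≤ 2) :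
    Group.IsSolvable G := by
  by_cases hpgroup : ∃ p : ℕ, p.Prime ∧ IsPGroup p G
  · obtain ⟨p, hp, hG⟩ := hpgroup
    have := Fact.mk hp
    have := hG.isNilpotent
    infer_instance
  -- A proper Sylow subgroup has height at most one, so it is cyclic.
  suffices IsZGroup G from inferInstance
  refine ⟨fun p hp P => ?_⟩
  have := Fact.mk hp
  have := P.isPGroup'.isNilpotent
  have hlt : (P : Subgroup G) < ⊤ := lt_top_iff_ne_top.2 fun htop =>
    hpgroup ⟨p, hp, (P.isPGroup'.to_le htop.ge).of_equiv topEquiv⟩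
  have hheight : Order.height (P : Subgroup G) ≤ 1 := by
    have := (Order.height_add_one_le hlt).trans h
    exact (ENat.add_le_add_iff_right ENat.one_ne_top).1 this
  have hfactors : Ω (Nat.card P) ≤ 1 := by
    exact_mod_cast (cardFactors_card_le_height_of_isSolvable (P : Subgroup G)).trans hheight
  obtain ⟨n, hn⟩ := P.isPGroup'.exists_card_eq
  rw [hn, ArithmeticFunction.cardFactors_apply_prime_pow hp] at hfactors
  exact isCyclic_of_card_dvd_prime (p := p) (hn ▸ (pow_dvd_pow p hfactors).trans (pow_one p).dvd)

theorem partialClosure_zero {d : ℕ} (x : Fin d → G) : partialClosure x 0 = ⊥ := by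
  simp [partialClosure]

theorem partialClosure_last {d : ℕ} (x : Fin d → G) :
    partialClosure x (Fin.last d) = closure (Set.range x) := by
  simp [partialClosure, ← Set.image_univ]

theorem closure_insert_eq_sup_zpowers (a : G) (s : Set G) :
    closure (insert a s) = closure s ⊔ zpowers a := by
  rw [Set.insert_eq, Set.union_comm, Subgroup.closure_union, zpowers_eq_closure]

theorem partialClosure_succ {d : ℕ} (x : Fin d → G) (i : Fin d) :
    partialClosure x i.succ = partialClosure x i.castSucc ⊔ zpowers (x i) := by
  have hset : {j : Fin d | (j : ℕ) < i.succ} = insert i {j : Fin d | (j : ℕ) < i.castSucc} := by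
    ext j
    simp only [Set.mem_ofPred_eq, Set.mem_insert_iff, Fin.ext_iff, Fin.val_succ, Fin.val_castSucc]
    omega
  rw [partialClosure, hset, Set.image_insert_eq, closure_insert_eq_sup_zpowers, partialClosure]

theorem strictMono_partialClosure_iff {d : ℕ} {x : Fin d → G} :
    StrictMono (partialClosure x) ↔ ∀ i, x i ∉ partialClosure x i.castSucc := by
  simp only [Fin.strictMono_iff_lt_succ, partialClosure_succ, left_lt_sup, zpowers_le]

theorem minGen_le_card {S : Finset G} (hS : closure (S : Set G) = ⊤) : minGen G ≤ S.card :=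
  Nat.sInf_le ⟨S, rfl, hS⟩

theorem exists_finset_card_eq_minGen [Group.FG G] :
    ∃ S : Finset G, S.card = minGen G ∧ closure (S : Set G) = ⊤ := by
  obtain ⟨S, hS⟩ := Group.fg_def.1 ‹Group.FG G›
  exact Nat.sInf_mem (s := {n | ∃ S : Finset G, S.card = n ∧ closure (S : Set G) = ⊤})
    ⟨_, S, rfl, hS⟩

theorem exists_strictMono_partialClosure [Group.FG G] :
    ∃ x : Fin (minGen G) → G, StrictMono (partialClosure x) := by
  classical
  obtain ⟨S, hcard, hS⟩ := exists_finset_card_eq_minGen (G := G)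
  let e := S.equivFinOfCardEq hcard
  refine ⟨fun i => e.symm i, strictMono_partialClosure_iff.2 fun i hi => ?_⟩
  have hle : partialClosure (fun i => (e.symm i : G)) i.castSucc ≤
      closure (S.erase (e.symm i) : Set G) := by
    refine closure_mono ?_
    rintro _ ⟨j, hj, rfl⟩
    have hji : j ≠ i := by
      rintro rfl
      simp at hj
    simpa [Subtype.val_inj] using hji
  have htop : closure (S.erase (e.symm i) : Set G) = ⊤ := by
    rw [eq_top_iff, ← hS, closure_le]
    intro s hs
    by_cases hse : s = e.symm i
    · exact hse ▸ hle hi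
    · exact subset_closure (by simpa [hse] using hs)
  have herase := Finset.card_erase_lt_of_mem (e.symm i).2
  have hmin := minGen_le_card htop
  omega

theorem exists_strictMono_partialClosure_of_strictMono {n : ℕ} {c : Fin (n + 1) → Subgroup G}
    (hc : StrictMono c) :
    ∃ x : Fin n → G, StrictMono (partialClosure x) ∧ closure (Set.range x) ≤ c (Fin.last n) := by
  choose x hmem hnotMem using fun i : Fin n => SetLike.exists_of_lt (hc i.castSucc_lt_succ)
  have hle : ∀ i, partialClosure x i ≤ c i := by
    intro i
    induction i using Fin.induction with
    | zero => simp [partialClosure_zero]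
    | succ i ih =>
      rw [partialClosure_succ, sup_le_iff, zpowers_le]
      exact ⟨ih.trans (hc i.castSucc_lt_succ).le, hmem i⟩
  exact ⟨x, strictMono_partialClosure_iff.2 fun i hi => hnotMem i (hle _ hi),
    (partialClosure_last x).symm.trans_le (hle _)⟩

theorem DUnifGen.height_top_le {d : ℕ} (h : DUnifGen G d) :
    Order.height (⊤ : Subgroup G) ≤ d := by
  refine Order.height_le fun s _ => ?_
  norm_cast
  by_contra! hlen
  obtain ⟨x, hx, hle⟩ := exists_strictMono_partialClosure_of_strictMono
    (s.strictMono.comp (Fin.strictMono_castLE (show d + 1 ≤ s.length + 1 by omega)))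
  have hlt : s (Fin.castLE (by omega) (Fin.last d)) < s.last := s.strictMono hlen
  exact (hle.trans_lt hlt).ne_top (h.2 x hx)

theorem uniformlyGenerated_iff_height_top_le [Group.FG G] :
    UniformlyGenerated G ↔ Order.height (⊤ : Subgroup G) ≤ minGen G := by
  refine ⟨DUnifGen.height_top_le, fun h => ⟨exists_strictMono_partialClosure, fun x hx => ?_⟩⟩
  rw [← partialClosure_last]
  by_contra hne
  have hlast : (minGen G : ℕ∞) ≤ Order.height (partialClosure x (Fin.last _)) :=
    Order.length_le_height_last (p := LTSeries.mk _ _ hx)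
  have hlt : (minGen G : ℕ∞) + 1 ≤ minGen G :=
    calc (minGen G : ℕ∞) + 1
        ≤ Order.height (partialClosure x (Fin.last _)) + 1 := by gcongr
      _ ≤ Order.height (⊤ : Subgroup G) := Order.height_add_one_le (lt_top_iff_ne_top.2 hne)
      _ ≤ minGen G := h
  norm_cast at hlt
  omega

theorem UniformlyGenerated.height_closure_le [Finite G] (h : UniformlyGenerated G) (S : Finset G) :
    Order.height (closure (S : Set G)) ≤ S.card := by
  classical
  -- Adjoining a new element to a set that does not generate raises the height by at least one and
  -- the cardinality by exactly one, so the bound descends from generating sets.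
  induction hH : closure (S : Set G) using WellFoundedGT.induction generalizing S with
  | ind H ih =>
    subst hH
    by_cases htop : closure (S : Set G) = ⊤
    · rw [htop]
      exact h.height_top_le.trans (by exact_mod_cast minGen_le_card htop)
    obtain ⟨g, -, hg⟩ := SetLike.exists_of_lt (lt_top_iff_ne_top.2 htop)
    have hgS : g ∉ S := fun hgS => hg (subset_closure hgS)
    have hlt : closure (S : Set G) < closure ((insert g S : Finset G) : Set G) := by
      rw [Finset.coe_insert, closure_insert_eq_sup_zpowers, left_lt_sup, zpowers_le]
      exact hg
    have hinsert := (Order.height_add_one_le hlt).trans (ih _ hlt (insert g S) rfl)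
    rw [Finset.card_insert_of_notMem hgS, Nat.cast_add_one] at hinsert
    exact (ENat.add_le_add_iff_right ENat.one_ne_top).1 hinsert

theorem cardFactors_card_closure_le [Finite G]
    (h : ∀ (H : Subgroup G) (a : G),
      Ω (Nat.card (H ⊔ zpowers a : Subgroup G)) ≤ Ω (Nat.card H) + 1) (S : Finset G) :
    Ω (Nat.card (closure (S : Set G))) ≤ S.card := by
  classical
  induction S using Finset.induction_on with
  | empty => simp
  | insert a S ha ih =>
    rw [Finset.coe_insert, closure_insert_eq_sup_zpowers, Finset.card_insert_of_notMem ha]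
    exact (h _ a).trans (by gcongr)

theorem uniformlyGenerated_of_cardFactors_card_sup_zpowers_le [Finite G]
    (h : ∀ (H : Subgroup G) (a : G),
      Ω (Nat.card (H ⊔ zpowers a : Subgroup G)) ≤ Ω (Nat.card H) + 1) :
    UniformlyGenerated G := by
  obtain ⟨S, hcard, hS⟩ := exists_finset_card_eq_minGen (G := G)
  have hle := cardFactors_card_closure_le h S
  rw [hS, hcard] at hle
  exact uniformlyGenerated_iff_height_top_le.2
    ((height_le_cardFactors_card ⊤).trans (by exact_mod_cast hle))

theorem UniformlyGenerated.orderOf_prime [Finite G] (h : UniformlyGenerated G) {x : G}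
    (hx : x ≠ 1) : (orderOf x).Prime := by
  have hle : (Ω (Nat.card (zpowers x)) : ℕ∞) ≤ 1 := by
    refine (cardFactors_card_le_height_of_isSolvable _).trans ?_
    simpa [zpowers_eq_closure] using h.height_closure_le {x}
  have hpos : 0 < Ω (Nat.card (zpowers x)) :=
    ArithmeticFunction.cardFactors_pos_iff_one_lt.2 ((one_lt_card_iff_ne_bot _).2
      (zpowers_ne_bot.2 hx))
  norm_cast at hle
  exact ArithmeticFunction.cardFactors_eq_one_iff_prime.1 (Nat.card_zpowers x ▸ by omega)

theorem UniformlyGenerated.cardFactors_card_closure_pair_le [Finite G] (h : UniformlyGenerated G)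
    (x y : G) : Ω (Nat.card (closure {x, y})) ≤ 2 := by
  classical
  have hheight : Order.height (closure {x, y}) ≤ 2 := by
    have hle := h.height_closure_le {x, y}
    rw [Finset.coe_pair] at hle
    exact hle.trans (by exact_mod_cast Finset.card_le_two)
  have hsolvable : Group.IsSolvable (closure {x, y}) :=
    isSolvable_of_height_top_le_two ((height_top_le_height _).trans hheight)
  exact_mod_cast (cardFactors_card_le_height_of_isSolvable _).trans hheight

theorem normal_of_card_eq_of_cardFactors_card_le_two [Finite G] {p : ℕ} (hp : p.Prime)
    (hmax : ∀ q, q.Prime → q ∣ Nat.card G → q ≤ p) (hG : Ω (Nat.card G) ≤ 2) {H : Subgroup G}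
    (hH : Nat.card H = p) : H.Normal := by
  have hcard : Nat.card G = p * H.index := by rw [← hH, H.card_mul_index]
  have hindex : Ω H.index ≤ 1 := by
    rw [hcard, ArithmeticFunction.cardFactors_mul hp.ne_zero index_ne_zero_of_finite,
      ArithmeticFunction.cardFactors_apply_prime hp] at hG
    omega
  obtain hzero | hone := Nat.le_one_iff_eq_zero_or_eq_one.1 hindex
  · have hone := ArithmeticFunction.cardFactors_eq_zero_iff_eq_zero_or_one.1 hzero
    exact normal_of_index_eq_one (hone.resolve_left index_ne_zero_of_finite)
  have hprime := ArithmeticFunction.cardFactors_eq_one_iff_prime.1 hone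
  have hdvd : H.index ∣ Nat.card G := H.index_dvd_card
  have hle : H.index ≤ p := hmax _ hprime hdvd
  have hminFac : (Nat.card G).minFac.Prime := Nat.minFac_prime fun hG1 =>
    hp.ne_one (Nat.dvd_one.1 (hG1 ▸ Dvd.intro _ hcard.symm))
  refine normal_of_index_eq_minFac_card (le_antisymm ?_ (Nat.minFac_le_of_dvd hprime.two_le hdvd))
  have hmul : (Nat.card G).minFac ∣ p * H.index := hcard ▸ Nat.minFac_dvd _
  rcases (Nat.Prime.dvd_mul hminFac).1 hmul with hmin | hmin
  · exact hle.trans_eq ((Nat.prime_dvd_prime_iff_eq hminFac hp).1 hmin).symm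
  · exact ((Nat.prime_dvd_prime_iff_eq hminFac hprime).1 hmin).ge

theorem UniformlyGenerated.normal_zpowers [Finite G] (h : UniformlyGenerated G) {p : ℕ}
    (hp : p.Prime) (hmax : ∀ q, q.Prime → q ∣ Nat.card G → q ≤ p) {x : G} (hx : x ^ p = 1) :
    (zpowers x).Normal := by
  rcases eq_or_ne x 1 with rfl | hx1
  · rw [zpowers_one_eq_bot]
    infer_instance
  have := Fact.mk hp
  refine ⟨fun y hy g => ?_⟩
  have hgK : g ∈ closure {x, g} := subset_closure (by simp)
  have hxK : zpowers x ≤ closure {x, g} := zpowers_le.2 (subset_closure (by simp))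
  have hcard : Nat.card ((zpowers x).subgroupOf (closure {x, g})) = p := by
    rw [Nat.card_congr (subgroupOfEquivOfLe hxK).toEquiv, Nat.card_zpowers,
      orderOf_eq_prime hx hx1]
  have hnormal := normal_of_card_eq_of_cardFactors_card_le_two hp
    (fun q hq hdvd => hmax q hq (hdvd.trans (card_subgroup_dvd_card _)))
    (h.cardFactors_card_closure_pair_le x g) hcard
  exact (normal_subgroupOf_iff hxK).1 hnormal y g hy hgK

theorem disjoint_zpowers_of_notMem {H : Subgroup G} {y : G} (hy : (orderOf y).Prime)
    (hyH : y ∉ H) : Disjoint H (zpowers y) := by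
  have : Fact (Nat.card (zpowers y)).Prime := ⟨by rwa [Nat.card_zpowers]⟩
  rcases (H.subgroupOf (zpowers y)).eq_bot_or_eq_top_of_prime_card with hbot | htop
  · exact subgroupOf_eq_bot.1 hbot
  · exact absurd (subgroupOf_eq_top.1 htop (mem_zpowers y)) hyH

theorem commute_of_normal_zpowers {p : ℕ} (hp : p.Prime) {x y : G} (hy : y ^ p = 1)
    (hnx : (zpowers x).Normal) (hny : (zpowers y).Normal) : Commute x y := by
  have := Fact.mk hp
  by_cases hyx : y ∈ zpowers x
  · obtain ⟨k, rfl⟩ := hyx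
    exact (Commute.refl x).zpow_right k
  have hyp : orderOf y = p := orderOf_eq_prime hy fun hy1 => hyx (hy1 ▸ one_mem _)
  exact commute_of_normal_of_disjoint _ _ hnx hny (disjoint_zpowers_of_notMem (hyp ▸ hp) hyx) _ _
    (mem_zpowers x) (mem_zpowers y)

theorem isElementaryAbelian_of_pow_eq_one [Finite G] {p : ℕ} (hp : p.Prime)
    (hcomm : ∀ a b : G, Commute a b) (hpow : ∀ a : G, a ^ p = 1) : IsElementaryAbelian G := by
  let _ : CommGroup G := { ‹Group G› with mul_comm := fun a b => (hcomm a b).eq }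
  have : Fact p.Prime := ⟨hp⟩
  let _ : Module (ZMod p) (Additive G) :=
    AddCommGroup.zmodModule (n := p) (G := Additive G) hpow
  let b := Module.finBasis (ZMod p) (Additive G)
  exact ⟨p, _, hp, ⟨(AddEquiv.toMultiplicativeRight b.equivFun.toAddEquiv).trans
    (MulEquiv.piMultiplicative _)⟩⟩

theorem exists_forall_eq_pow_of_forall_mem_zpowers {A : Type*} [CommGroup A] {p : ℕ}
    (hp : p.Prime) (hpow : ∀ a : A, a ^ p = 1) {f : A →* A} (hf : ∀ a, f a ∈ zpowers a) :
    ∃ c : ℕ, ∀ a, f a = a ^ c := by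
  have : Fact p.Prime := ⟨hp⟩
  let _ : Module (ZMod p) (Additive A) :=
    AddCommGroup.zmodModule (n := p) (G := Additive A) hpow
  let φ := (MonoidHom.toAdditive f).toZModLinearMap p
  have hdep : ∀ v, ¬ LinearIndependent (ZMod p) ![v, φ v] := by
    intro v hv
    obtain ⟨k, hk⟩ := hf v.toMul
    have hkv : (k : ZMod p) • v + (-1 : ZMod p) • φ v = 0 := by
      rw [Int.cast_smul_eq_zsmul, neg_one_smul, add_neg_eq_zero]
      exact hk
    have := LinearIndependent.pair_iff.1 hv _ _ hkv
    simp at this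
  obtain ⟨c, hc⟩ := LinearMap.exists_eq_smul_id_of_forall_notLinearIndependent hdep
  refine ⟨c.val, fun a => ?_⟩
  have hca := LinearMap.congr_fun hc (Additive.ofMul a)
  rw [LinearMap.smul_apply, Module.End.one_apply, ← ZMod.natCast_zmod_val c,
    Nat.cast_smul_eq_nsmul] at hca
  exact hca

theorem conj_pow_eq_pow_pow {g x : G} {c : ℕ} (h : g * x * g⁻¹ = x ^ c) (k : ℕ) :
    g ^ k * x * (g ^ k)⁻¹ = x ^ c ^ k := by
  induction k with
  | zero => simp
  | succ k ih =>
    calc g ^ (k + 1) * x * (g ^ (k + 1))⁻¹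
        = g * (g ^ k * x * (g ^ k)⁻¹) * g⁻¹ := by group
      _ = x ^ c ^ (k + 1) := by rw [ih, ← conj_pow, h, ← pow_mul, pow_succ']

theorem exists_ker_sup_zpowers_eq_top {A : Type*} [Group A] [IsCyclic A] (f : G →* A) :
    ∃ g, f.ker ⊔ zpowers g = ⊤ := by
  obtain ⟨⟨_, g, rfl⟩, hgen⟩ := IsCyclic.exists_generator (α := f.range)
  refine ⟨g, eq_top_iff.2 fun a _ => ?_⟩
  obtain ⟨k, hk⟩ := hgen ⟨f a, a, rfl⟩
  have hfk : f g ^ k = f a := congrArg Subtype.val hk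
  have hker : a * (g ^ k)⁻¹ ∈ f.ker := by
    rw [MonoidHom.mem_ker, map_mul, map_inv, map_zpow, hfk, mul_inv_cancel]
  simpa only [inv_mul_cancel_right] using mul_mem_sup hker (zpow_mem (mem_zpowers g) k)

theorem ker_conjNormal (H : Subgroup G) [H.Normal] :
    (MulAut.conjNormal : G →* MulAut H).ker = centralizer (H : Set G) := by
  ext g
  simp only [MonoidHom.mem_ker, MulEquiv.ext_iff, Subtype.ext_iff, MulAut.conjNormal_apply,
    MulAut.one_apply, Subtype.forall, mem_centralizer_iff, mul_inv_eq_iff_eq_mul, SetLike.mem_coe,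
    eq_comm (a := g * _)]

theorem exists_centralizer_sup_zpowers_eq_top {H : Subgroup G} (hH : (Nat.card H).Prime)
    (hnormal : H.Normal) : ∃ g, centralizer (H : Set G) ⊔ zpowers g = ⊤ := by
  have := Fact.mk hH
  have : IsCyclic H := isCyclic_of_prime_card rfl
  have : IsCyclic (MulAut H) := isCyclic_of_surjective (IsCyclic.mulAutMulEquiv H).symm
    (IsCyclic.mulAutMulEquiv H).symm.surjective
  rw [← ker_conjNormal]
  exact exists_ker_sup_zpowers_eq_top _

theorem pow_orderOf_eq_one_of_commute (hprime : ∀ g : G, g ≠ 1 → (orderOf g).Prime) {g x : G}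
    (hx : x ≠ 1) (hgx : Commute g x) : g ^ orderOf x = 1 := by
  rcases eq_or_ne g 1 with rfl | hg
  · exact one_pow _
  rcases eq_or_ne (orderOf g) (orderOf x) with heq | hne
  · rw [← heq, pow_orderOf_eq_one]
  have hmul : orderOf (g * x) = orderOf g * orderOf x :=
    hgx.orderOf_mul_eq_mul_orderOf_of_coprime
      ((Nat.coprime_primes (hprime g hg) (hprime x hx)).2 hne)
  have hgx1 : g * x ≠ 1 := fun h1 => hne <| by
    rw [eq_inv_of_mul_eq_one_left h1, orderOf_inv]
  exact absurd (hmul ▸ hprime _ hgx1)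
    (Nat.not_prime_mul (hprime g hg).ne_one (hprime x hx).ne_one)

theorem mem_centralizer_zpowers_iff {g x : G} :
    g ∈ centralizer (zpowers x : Set G) ↔ Commute g x := by
  rw [zpowers_eq_closure, centralizer_closure, mem_centralizer_singleton_iff, Commute, SemiconjBy]

theorem exists_forall_conj_eq_pow {N : Subgroup G} [N.Normal] {p : ℕ} (hp : p.Prime)
    (hcomm : ∀ a ∈ N, ∀ b ∈ N, a * b = b * a) (hpow : ∀ a ∈ N, a ^ p = 1) {g : G}
    (hg : ∀ a ∈ N, g * a * g⁻¹ ∈ zpowers a) : ∃ c : ℕ, ∀ a ∈ N, g * a * g⁻¹ = a ^ c := by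
  let _ : CommGroup N :=
    { N.toGroup with mul_comm := fun a b => Subtype.ext (hcomm a a.2 b b.2) }
  obtain ⟨c, hc⟩ := exists_forall_eq_pow_of_forall_mem_zpowers hp
    (fun a : N => Subtype.ext (hpow a a.2)) (f := (MulAut.conjNormal g : MulAut N).toMonoidHom)
    fun a => by
      obtain ⟨k, hk⟩ := hg a a.2
      exact ⟨k, Subtype.ext hk⟩
  exact ⟨c, fun a ha => congrArg Subtype.val (hc ⟨a, ha⟩)⟩

theorem commute_iff_modEq_one_of_conj_eq_pow {g x : G} {c : ℕ} (h : g * x * g⁻¹ = x ^ c) :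
    Commute g x ↔ c ≡ 1 [MOD orderOf x] := by
  rw [← pow_eq_pow_iff_modEq, ← h, pow_one, mul_inv_eq_iff_eq_mul, Commute, SemiconjBy]

theorem pow_orderOf_modEq_one_of_conj_eq_pow {g x : G} {c : ℕ} (h : g * x * g⁻¹ = x ^ c) :
    c ^ orderOf g ≡ 1 [MOD orderOf x] := by
  rw [← pow_eq_pow_iff_modEq, ← conj_pow_eq_pow_pow h, pow_orderOf_eq_one]
  group

theorem isElementaryAbelian_or_isScalarExtension_of_normal_zpowers [Finite G] {p : ℕ}
    (hp : p.Prime) (hprime : ∀ g : G, g ≠ 1 → (orderOf g).Prime)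
    (hnormal : ∀ y : G, y ^ p = 1 → (zpowers y).Normal) {x : G} (hx : orderOf x = p) :
    IsElementaryAbelian G ∨ IsScalarExtension G := by
  have hcomm (a b : G) (ha : a ^ p = 1) (hb : b ^ p = 1) : Commute a b :=
    commute_of_normal_zpowers hp hb (hnormal a ha) (hnormal b hb)
  have hxp : x ^ p = 1 := hx ▸ pow_orderOf_eq_one x
  have hx1 : x ≠ 1 := orderOf_eq_one_iff.not.1 (hx ▸ hp.ne_one)
  have hnx := hnormal x hxp
  let N := centralizer (zpowers x : Set G)
  have hN (a : G) : a ∈ N ↔ a ^ p = 1 := mem_centralizer_zpowers_iff.trans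
    ⟨fun hax => hx ▸ pow_orderOf_eq_one_of_commute hprime hx1 hax, fun ha => hcomm a x ha hxp⟩
  obtain ⟨g, hg⟩ : ∃ g, N ⊔ zpowers g = ⊤ :=
    exists_centralizer_sup_zpowers_eq_top (by rwa [Nat.card_zpowers, hx]) hnx
  by_cases hgN : g ∈ N
  · rw [sup_eq_left.2 (zpowers_le.2 hgN)] at hg
    have hpow (a : G) : a ^ p = 1 := (hN a).1 (hg ▸ mem_top a)
    exact .inl (isElementaryAbelian_of_pow_eq_one hp (fun a b => hcomm a b (hpow a) (hpow b)) hpow)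
  have hNcomm : ∀ a ∈ N, ∀ b ∈ N, a * b = b * a :=
    fun a ha b hb => hcomm a b ((hN a).1 ha) ((hN b).1 hb)
  obtain ⟨c, hc⟩ := exists_forall_conj_eq_pow hp hNcomm (fun a => (hN a).1)
    fun a ha => (hnormal a ((hN a).1 ha)).conj_mem a (mem_zpowers a) g
  have hcx := hc x ((hN x).2 hxp)
  have hg1 : g ≠ 1 := fun h => hgN (h ▸ one_mem N)
  refine .inr ⟨p, orderOf g, hp, hprime g hg1, N, g, c, inferInstance, hNcomm, fun a => (hN a).1,
    rfl, hg, (disjoint_zpowers_of_notMem (hprime g hg1) hgN).eq_bot, hc, fun hc1 => hgN ?_,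
    hx ▸ pow_orderOf_modEq_one_of_conj_eq_pow hcx⟩
  exact mem_centralizer_zpowers_iff.2 ((commute_iff_modEq_one_of_conj_eq_pow hcx).2 (hx ▸ hc1))

theorem UniformlyGenerated.isElementaryAbelian_or_isScalarExtension [Finite G]
    (h : UniformlyGenerated G) : IsElementaryAbelian G ∨ IsScalarExtension G := by
  rcases subsingleton_or_nontrivial G with hG | hG
  · exact .inl (isElementaryAbelian_of_pow_eq_one Nat.prime_two
      (fun _ _ => Subsingleton.elim _ _) fun _ => Subsingleton.elim _ _)
  obtain ⟨p, hpmem, hpmax⟩ := (Nat.card G).primeFactors.exists_max_image id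
    (Nat.nonempty_primeFactors.2 Finite.one_lt_card)
  have hp := Nat.prime_of_mem_primeFactors hpmem
  have hmax : ∀ q, q.Prime → q ∣ Nat.card G → q ≤ p := fun q hq hdvd =>
    hpmax q (Nat.mem_primeFactors.2 ⟨hq, hdvd, Nat.card_pos.ne'⟩)
  have := Fact.mk hp
  obtain ⟨x, hx⟩ := exists_prime_orderOf_dvd_card' (G := G) p (Nat.dvd_of_mem_primeFactors hpmem)
  exact isElementaryAbelian_or_isScalarExtension_of_normal_zpowers hp
    (fun _ => h.orderOf_prime) (fun _ => h.normal_zpowers hp hmax) hx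

theorem cardFactors_card_zpowers_le_one {a : G} {p : ℕ} (hp : p.Prime) (ha : a ^ p = 1) :
    Ω (Nat.card (zpowers a)) ≤ 1 := by
  rw [Nat.card_zpowers]
  rcases (Nat.dvd_prime hp).1 (orderOf_dvd_of_pow_eq_one ha) with hone | heq
  · simp [hone]
  · rw [heq, ArithmeticFunction.cardFactors_apply_prime hp]

theorem IsElementaryAbelian.uniformlyGenerated [Finite G] (h : IsElementaryAbelian G) :
    UniformlyGenerated G := by
  obtain ⟨p, k, hp, ⟨e⟩⟩ := h
  have hcomm : ∀ a b : G, a * b = b * a := fun a b => e.injective (by simp [mul_comm])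
  have hpow : ∀ a : G, a ^ p = 1 := fun a => e.injective <| by
    ext i
    simp
  let _ : CommGroup G := { ‹Group G› with mul_comm := hcomm }
  refine uniformlyGenerated_of_cardFactors_card_sup_zpowers_le fun H a => ?_
  exact (cardFactors_card_sup_le H (zpowers a)).trans
    (by gcongr; exact cardFactors_card_zpowers_le_one hp (hpow a))

theorem isCoatom_of_index_prime {N : Subgroup G} (hN : N.index.Prime) : IsCoatom N := by
  refine ⟨fun htop => hN.ne_one (htop ▸ index_top), fun K hNK => ?_⟩
  have hmul := relIndex_mul_index hNK.le
  rcases (Nat.dvd_prime hN).1 (Dvd.intro_left _ hmul) with hone | heq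
  · exact index_eq_one.1 hone
  · rw [heq, mul_eq_right₀ hN.ne_zero, relIndex_eq_one] at hmul
    exact absurd hmul hNK.not_ge

theorem normal_of_le_of_conj_eq_pow [Finite G] {N : Subgroup G} {g : G} {c : ℕ}
    (hcomm : ∀ a ∈ N, ∀ b ∈ N, a * b = b * a) (hscalar : ∀ a ∈ N, g * a * g⁻¹ = a ^ c)
    (hsup : N ⊔ zpowers g = ⊤) {H : Subgroup G} (hH : H ≤ N) : H.Normal := by
  rw [← normalizer_eq_top_iff, eq_top_iff, ← hsup, sup_le_iff, zpowers_le]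
  constructor
  · refine fun a ha => mem_normalizer_fintype fun x hx => ?_
    rwa [hcomm a ha x (hH hx), mul_inv_cancel_right]
  · refine mem_normalizer_fintype fun x hx => ?_
    rw [hscalar x (hH hx)]
    exact pow_mem hx c

theorem commute_pow_index_of_isCoatom {N : Subgroup G} [N.Normal] (hN : IsCoatom N)
    (hcomm : ∀ a ∈ N, ∀ b ∈ N, a * b = b * a) {a : G} (ha : a ∉ N) (g : G) :
    Commute g (a ^ N.index) := by
  have hle : N ⊔ zpowers a ≤ centralizer {a ^ N.index} := by
    rw [sup_le_iff, zpowers_le]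
    exact ⟨fun b hb => mem_centralizer_singleton_iff.2 (hcomm b hb _ (N.pow_index_mem a)),
      mem_centralizer_singleton_iff.2 ((Commute.refl a).pow_right _)⟩
  rw [hN.2 _ (left_lt_sup.2 (by rwa [zpowers_le]))] at hle
  exact mem_centralizer_singleton_iff.1 (hle (mem_top g))

theorem cardFactors_card_sup_zpowers_le_of_isCoatom [Finite G] {N : Subgroup G} (hN : IsCoatom N)
    (hnormal : ∀ H ≤ N, H.Normal) (hcyclic : ∀ a : G, Ω (Nat.card (zpowers a)) ≤ 1)
    (H : Subgroup G) (a : G) :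
    Ω (Nat.card (H ⊔ zpowers a : Subgroup G)) ≤ Ω (Nat.card H) + 1 := by
  by_cases hH : H ≤ N
  · have := hnormal H hH
    exact (cardFactors_card_sup_le H _).trans (by gcongr; exact hcyclic a)
  -- Now `G = N ⊔ H`, so modulo `H` the element `a` may be replaced by an element of `N`.
  have := hnormal N le_rfl
  have htop : N ⊔ H = ⊤ := hN.2 _ (left_lt_sup.2 hH)
  obtain ⟨n, hn, b, hb, rfl⟩ := mem_sup_of_normal_left.1 (htop ▸ mem_top a)
  have := hnormal (zpowers n) (zpowers_le.2 hn)
  have hle : H ⊔ zpowers (n * b) ≤ zpowers n ⊔ H := by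
    rw [sup_le_iff, zpowers_le]
    exact ⟨le_sup_right, mul_mem_sup (mem_zpowers n) hb⟩
  calc Ω (Nat.card (H ⊔ zpowers (n * b) : Subgroup G))
      ≤ Ω (Nat.card (zpowers n ⊔ H : Subgroup G)) := cardFactors_card_strictMono.monotone hle
    _ ≤ Ω (Nat.card (zpowers n)) + Ω (Nat.card H) := cardFactors_card_sup_le _ _
    _ ≤ Ω (Nat.card H) + 1 := by rw [add_comm]; gcongr; exact hcyclic n

theorem IsScalarExtension.uniformlyGenerated [Finite G] (h : IsScalarExtension G) :
    UniformlyGenerated G := by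
  obtain ⟨p, q, hp, hq, N, g, c, hN, hcomm, hpow, hg, hsup, hinf, hscalar, hc, -⟩ := h
  have hindex : N.index = q := by
    rw [← relIndex_top_right, ← hsup, relIndex_sup_left, ← inf_relIndex_right, hinf,
      relIndex_bot_left, Nat.card_zpowers, hg]
  have hcoatom : IsCoatom N := isCoatom_of_index_prime (hindex ▸ hq)
  have hpow_notMem : ∀ a ∉ N, a ^ q = 1 := by
    intro a ha
    by_contra hne
    have hmem : a ^ q ∈ N := hindex ▸ N.pow_index_mem a
    have hcentral : Commute g (a ^ q) := hindex ▸ commute_pow_index_of_isCoatom hcoatom hcomm ha g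
    have := Fact.mk hp
    have hmod := (commute_iff_modEq_one_of_conj_eq_pow (hscalar _ hmem)).1 hcentral
    rw [orderOf_eq_prime (hpow _ hmem) hne] at hmod
    exact hc hmod
  refine uniformlyGenerated_of_cardFactors_card_sup_zpowers_le
    (cardFactors_card_sup_zpowers_le_of_isCoatom hcoatom
      (fun H => normal_of_le_of_conj_eq_pow hcomm hscalar hsup) fun a => ?_)
  by_cases ha : a ∈ N
  · exact cardFactors_card_zpowers_le_one hp (hpow a ha)
  · exact cardFactors_card_zpowers_le_one hq (hpow_notMem a ha)

end

/-- Main Theorem: a finite group is uniformly generated iff it is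
elementary abelian `(C_p)^d`, or of the form `(C_p)^{d-1} ⋊ C_q` with `C_q` acting
as a nontrivial scalar. -/
theorem uniformlyGenerated_iff (G : Type*) [Group G] [Finite G] :
    UniformlyGenerated G ↔ IsElementaryAbelian G ∨ IsScalarExtension G := by
  exact ⟨UniformlyGenerated.isElementaryAbelian_or_isScalarExtension, fun h =>
    h.elim IsElementaryAbelian.uniformlyGenerated IsScalarExtension.uniformlyGenerated⟩
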